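/- Let T > 0, let K ⊆ ℝ be a nonempty compact set, and let ν : [0,T] × K → ℝ be continuous with inf_{(t,x)} ν(t,x) > 0. Then for every ε > 0 there exist a continuously differentiable function g : [0,T] × K × ℝ → ℝ and a function ν* : [0,T] × K → (0,∞) such that for every (t,x) ∈ [0,T] × K: (a) z = ν*(t,x) is the unique positive real solution of g(t,x,z) = 0; (b) ∂_z g(t,x,ν*(t,x)) ≠ 0; and (c) sup_{(t,x) ∈ [0,T] × K} |ν*(t,x) − ν(t,x)| < ε. -/

import Mathlib

/-!
A positive smooth function `f` is the implicit volatility of the smooth driver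
`g (x, z) = z - f x`, so it suffices to approximate `ν` by positive smooth functions. Since `(0, ∞)`
is an interval, Tietze's theorem extends `ν` from a closed set to a *positive* continuous function
on the whole space, and a smooth approximation of the extension with pointwise error smaller than
the extension itself is again positive.
-/

open scoped ContDiff

/-- `v` is the implicit volatility determined by `h`, where `h` is the section `z ↦ g (t, x, z)` of
a driver at a fixed point: `v` is the unique positive root of `h`, and `h` has nonzero derivative
there. As `deriv` vanishes where the derivative does not exist, the last condition includes
differentiability of `h` at `v`. -/
structure IsImplicitVolatility (h : ℝ → ℝ) (v : ℝ) : Prop where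
  pos : 0 < v
  root : h v = 0
  unique : ∀ z, 0 < z → h z = 0 → z = v
  deriv_ne_zero : deriv h v ≠ 0

theorem isImplicitVolatility_sub_const {v : ℝ} (hv : 0 < v) :
    IsImplicitVolatility (fun z => z - v) v where
  pos := hv
  root := sub_self v
  unique _ _ hz := sub_eq_zero.mp hz
  deriv_ne_zero := by simp

theorem exists_continuousMap_pos_eqOn {X : Type*} [TopologicalSpace X] [NormalSpace X] {s : Set X}
    (hs : IsClosed s) {f : X → ℝ} (hf : ContinuousOn f s) (hpos : ∀ x ∈ s, 0 < f x) :
    ∃ F : C(X, ℝ), (∀ x, 0 < F x) ∧ Set.EqOn F f s := by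
  obtain ⟨F, hFpos, hFf⟩ := ContinuousMap.exists_restrict_eq_forall_mem_of_closed
    ⟨s.domRestrict f, hf.domRestrict⟩ (t := Set.Ioi 0) (fun x => hpos x x.2) Set.nonempty_Ioi hs
  exact ⟨F, hFpos, fun x hx => DFunLike.congr_fun hFf ⟨x, hx⟩⟩

section SmoothApproximation

variable {E : Type*} [NormedAddCommGroup E] [NormedSpace ℝ E] [FiniteDimensional ℝ E]
  {f ε : E → ℝ}

theorem exists_contDiff_pos_approx (hf : Continuous f) (hpos : ∀ x, 0 < f x)
    (hε : Continuous ε) (hε_pos : ∀ x, 0 < ε x) :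
    ∃ φ : E → ℝ, ContDiff ℝ ∞ φ ∧ (∀ x, 0 < φ x) ∧ ∀ x, |φ x - f x| < ε x := by
  obtain ⟨φ, hφ, hφf, -⟩ := hf.exists_contDiff_approx ⊤ (hε.min hf)
    fun x => lt_min (hε_pos x) (hpos x)
  have herr (x : E) : |φ x - f x| < ε x ∧ |φ x - f x| < f x := lt_min_iff.mp (hφf x)
  refine ⟨φ, hφ, fun x => ?_, fun x => (herr x).1⟩
  linarith [neg_lt_of_abs_lt (herr x).2]

theorem exists_contDiff_pos_approxOn {s : Set E} (hs : IsClosed s) (hf : ContinuousOn f s)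
    (hpos : ∀ x ∈ s, 0 < f x) (hε : ContinuousOn ε s) (hε_pos : ∀ x ∈ s, 0 < ε x) :
    ∃ φ : E → ℝ, ContDiff ℝ ∞ φ ∧ (∀ x, 0 < φ x) ∧ ∀ x ∈ s, |φ x - f x| < ε x := by
  obtain ⟨F, hFpos, hFf⟩ := exists_continuousMap_pos_eqOn hs hf hpos
  obtain ⟨δ, hδpos, hδε⟩ := exists_continuousMap_pos_eqOn hs hε hε_pos
  obtain ⟨φ, hφ, hφpos, hφF⟩ := exists_contDiff_pos_approx F.continuous hFpos δ.continuous hδpos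
  exact ⟨φ, hφ, hφpos, fun x hx => hFf hx ▸ hδε hx ▸ hφF x⟩

theorem nbm_universal_approximation_general {s : Set E} (hs : IsClosed s) {ν : E → ℝ}
    (hν : ContinuousOn ν s) (hpos : ∀ p ∈ s, 0 < ν p) (hε : ContinuousOn ε s)
    (hε_pos : ∀ p ∈ s, 0 < ε p) :
    ∃ (g : E × ℝ → ℝ) (νstar : E → ℝ), ContDiff ℝ ∞ g ∧ ContDiff ℝ ∞ νstar ∧
      (∀ p, IsImplicitVolatility (fun z => g (p, z)) (νstar p)) ∧
      ∀ p ∈ s, |νstar p - ν p| < ε p := by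
  obtain ⟨φ, hφ, hφpos, hφν⟩ := exists_contDiff_pos_approxOn hs hν hpos hε hε_pos
  exact ⟨fun q => q.2 - φ q.1, φ, by fun_prop, hφ,
    fun p => isImplicitVolatility_sub_const (hφpos p), hφν⟩

end SmoothApproximation

/-- Universal approximation property of canonical Neural-Brownian Motions: any continuous
target volatility `ν` bounded away from zero on a compact set `[0,T] × K` can be
reproduced to arbitrary uniform accuracy `ε` as the implicit volatility `ν*` of some
`C¹` driver `g` satisfying the unique-positive-root and regularity conditions. -/
theorem nbm_universal_approximation
    (T : ℝ) (hT : 0 < T) (K : Set ℝ) (hK : IsCompact K) (hKne : K.Nonempty)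
    (ν : ℝ × ℝ → ℝ) (hν : ContinuousOn ν (Set.Icc 0 T ×ˢ K))
    (hinf : 0 < sInf (ν '' (Set.Icc 0 T ×ˢ K))) :
    ∀ ε > (0 : ℝ), ∃ (g : ℝ × ℝ × ℝ → ℝ) (νstar : ℝ × ℝ → ℝ),
      ContDiff ℝ 1 g ∧
      ∀ p ∈ Set.Icc 0 T ×ˢ K,
        0 < νstar p ∧
        g (p.1, p.2, νstar p) = 0 ∧
        (∀ z : ℝ, 0 < z → g (p.1, p.2, z) = 0 → z = νstar p) ∧
        deriv (fun z => g (p.1, p.2, z)) (νstar p) ≠ 0 ∧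
        |νstar p - ν p| < ε := by
  intro ε hε
  have hS : IsCompact (Set.Icc 0 T ×ˢ K) := isCompact_Icc.prod hK
  have hpos : ∀ p ∈ Set.Icc 0 T ×ˢ K, 0 < ν p := fun p hp =>
    hinf.trans_le (csInf_le (hS.bddBelow_image hν) (Set.mem_image_of_mem ν hp))
  obtain ⟨g, νstar, hg, -, hroot, herr⟩ := nbm_universal_approximation_general hS.isClosed hν hpos
    (continuousOn_const (c := ε)) fun _ _ => hε
  have hg₁ : ContDiff ℝ 1 g := hg.of_le (by norm_cast)
  refine ⟨fun q => g ((q.1, q.2.1), q.2.2), νstar, by fun_prop, fun p hp => ?_⟩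
  exact ⟨(hroot p).pos, (hroot p).root, (hroot p).unique, (hroot p).deriv_ne_zero, herr p hp⟩
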